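/- Let m ≥ 1 be an integer, h = 2m, let 𝔅 be the 2h×2h complex matrix given in block form by 𝔅 = [[O_h, (1/2)I_h],[(1/2)I_h, O_h]], and let J_m be the h×h skew-symmetric matrix consisting of m diagonal 2×2 blocks [[0,1],[−1,0]]. Consider the ℂ-linear map Φ from so(2h,Q) = {H ∈ M(2h,ℂ) : Hᵗ·𝔅 = −𝔅·H} to the triple product Skew(h,ℂ)³ of the space of skew-symmetric h×h complex matrices, defined on H = [[H₁₁, H₁₂],[H₂₁, H₂₂]] by Φ(H) = (H₂₁ᵗ, H₂₁ᵗ + J_m·H₂₂ᵗ − H₁₁ᵗ·J_m − J_m·H₁₂ᵗ·J_m, H₂₁ᵗ − J_m·H₂₂ᵗ + H₁₁ᵗ·J_m − J_m·H₁₂ᵗ·J_m). Then each of the three components of Φ(H) is indeed a skew-symmetric matrix, and Φ is surjective onto Skew(h,ℂ)³. -/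

import Mathlib

open Matrix

/-- The `2m×2m` skew-symmetric matrix `J_m` with `m` diagonal blocks `[[0,1],[-1,0]]`
(here `h = 2m`). -/
noncomputable def Jmat (m : ℕ) : Matrix (Fin 2 × Fin m) (Fin 2 × Fin m) ℂ :=
  Matrix.blockDiagonal fun _ : Fin m => !![0, 1; -1, 0]

/-- The matrix `𝔅 = [[O_h, (1/2)I_h],[(1/2)I_h, O_h]]` of the quadratic form, `h = 2m`. -/
noncomputable def Bmat (m : ℕ) :
    Matrix ((Fin 2 × Fin m) ⊕ (Fin 2 × Fin m)) ((Fin 2 × Fin m) ⊕ (Fin 2 × Fin m)) ℂ :=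
  Matrix.fromBlocks 0 ((1 / 2 : ℂ) • 1) ((1 / 2 : ℂ) • 1) 0

/-- The first component of the differential `Φ`: `H ↦ H₂₁ᵗ`. -/
noncomputable def Phi₁ (m : ℕ)
    (H : Matrix ((Fin 2 × Fin m) ⊕ (Fin 2 × Fin m)) ((Fin 2 × Fin m) ⊕ (Fin 2 × Fin m)) ℂ) :
    Matrix (Fin 2 × Fin m) (Fin 2 × Fin m) ℂ :=
  (H.toBlocks₂₁)ᵀ

/-- The second component of `Φ`: `H ↦ H₂₁ᵗ + J_m H₂₂ᵗ - H₁₁ᵗ J_m - J_m H₁₂ᵗ J_m`. -/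
noncomputable def Phi₂ (m : ℕ)
    (H : Matrix ((Fin 2 × Fin m) ⊕ (Fin 2 × Fin m)) ((Fin 2 × Fin m) ⊕ (Fin 2 × Fin m)) ℂ) :
    Matrix (Fin 2 × Fin m) (Fin 2 × Fin m) ℂ :=
  (H.toBlocks₂₁)ᵀ + Jmat m * (H.toBlocks₂₂)ᵀ - (H.toBlocks₁₁)ᵀ * Jmat m
    - Jmat m * (H.toBlocks₁₂)ᵀ * Jmat m

/-- The third component of `Φ`: `H ↦ H₂₁ᵗ - J_m H₂₂ᵗ + H₁₁ᵗ J_m - J_m H₁₂ᵗ J_m`. -/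
noncomputable def Phi₃ (m : ℕ)
    (H : Matrix ((Fin 2 × Fin m) ⊕ (Fin 2 × Fin m)) ((Fin 2 × Fin m) ⊕ (Fin 2 × Fin m)) ℂ) :
    Matrix (Fin 2 × Fin m) (Fin 2 × Fin m) ℂ :=
  (H.toBlocks₂₁)ᵀ - Jmat m * (H.toBlocks₂₂)ᵀ + (H.toBlocks₁₁)ᵀ * Jmat m
    - Jmat m * (H.toBlocks₁₂)ᵀ * Jmat m

/-!
`Φ` is the action of `so(2h,Q)` on the affine chart `Z ↦ [I | Z]` evaluated at `Z = 0, J, -J`: for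
skew `Z`, the element `[[P, B], [C, -Pᵗ]]` with `B`, `C` skew has derivative
`Z B Z + ((Z P)ᵗ - Z P) - C`, which is skew. At `0` this is `-C`; the values at `±J` have even part
`J B J - C` and odd part `(J P)ᵗ - J P`. As `J` and `2` are invertible, `C`, `B` and `P` can be
chosen in turn so that the value at `0`, the even part and the odd part are any given skew matrices.
-/

open LieAlgebra.Orthogonal

section General

variable {n R : Type*} [Fintype n] [DecidableEq n] [CommRing R]

theorem transpose_sub_self_mem_so (X : Matrix n n R) : Xᵀ - X ∈ so n R := by
  simp

theorem mul_mul_mem_so {X Y : Matrix n n R} (hX : X ∈ so n R) (hY : Y ∈ so n R) :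
    Y * X * Y ∈ so n R := by
  rw [mem_so] at *
  simp [hX, hY, Matrix.mul_assoc]

theorem inv_mem_so {J : Matrix n n R} (hJ : J ∈ so n R) : J⁻¹ ∈ so n R := by
  rw [mem_so] at *
  have hneg : (-1 : Matrix n n R)⁻¹ = -1 := inv_eq_left_inv (by simp)
  rw [transpose_nonsing_inv, hJ, ← neg_one_mul J, Matrix.mul_inv_rev, hneg, mul_neg_one]

theorem mem_typeD_iff {H : Matrix (n ⊕ n) (n ⊕ n) R} :
    H ∈ typeD n R ↔ Hᵀ * JD n R = -(JD n R * H) := by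
  rw [typeD, mem_skewAdjointMatricesLieSubalgebra, mem_skewAdjointMatricesSubmodule,
    Matrix.IsSkewAdjoint, Matrix.IsAdjointPair, Matrix.mul_neg]

theorem fromBlocks_mem_typeD_iff {P B C D : Matrix n n R} :
    fromBlocks P B C D ∈ typeD n R ↔ B ∈ so n R ∧ C ∈ so n R ∧ D = -Pᵀ := by
  simp only [mem_typeD_iff, JD, fromBlocks_transpose, fromBlocks_neg, fromBlocks_multiply,
    fromBlocks_inj, mem_so, Matrix.mul_zero, Matrix.mul_one, Matrix.zero_mul,
    Matrix.one_mul, zero_add, add_zero]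
  constructor
  · rintro ⟨hC, hP, -, hB⟩
    exact ⟨hB, hC, by rw [hP, neg_neg]⟩
  · rintro ⟨hB, hC, rfl⟩
    exact ⟨hC, by simp, by simp, hB⟩

theorem exists_fromBlocks_of_mem_typeD {H : Matrix (n ⊕ n) (n ⊕ n) R} (hH : H ∈ typeD n R) :
    ∃ P, ∃ B ∈ so n R, ∃ C ∈ so n R, H = fromBlocks P B C (-Pᵀ) := by
  rw [← fromBlocks_toBlocks H] at hH
  obtain ⟨hB, hC, hD⟩ := fromBlocks_mem_typeD_iff.1 hH
  exact ⟨_, _, hB, _, hC, by rw [← hD, fromBlocks_toBlocks]⟩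

/-- The infinitesimal action of `H` on the affine chart `Z ↦ [I | Z]` of the Grassmannian: the row
space of `[I | Z] (1 + ε Hᵗ)` is that of `[I | Z + ε (chartDeriv Z H)]` to first order in `ε`.
The components of `Φ` are its values at `Z = 0, J, -J`. -/
def chartDeriv (Z : Matrix n n R) (H : Matrix (n ⊕ n) (n ⊕ n) R) : Matrix n n R :=
  H.toBlocks₂₁ᵀ + Z * H.toBlocks₂₂ᵀ - H.toBlocks₁₁ᵀ * Z - Z * H.toBlocks₁₂ᵀ * Z

theorem chartDeriv_fromBlocks {Z B C : Matrix n n R} (hZ : Z ∈ so n R) (hB : B ∈ so n R)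
    (hC : C ∈ so n R) (P : Matrix n n R) :
    chartDeriv Z (fromBlocks P B C (-Pᵀ)) = Z * B * Z + ((Z * P)ᵀ - Z * P) - C := by
  rw [mem_so] at *
  simp only [chartDeriv, toBlocks_fromBlocks₁₁, toBlocks_fromBlocks₁₂, toBlocks_fromBlocks₂₁,
    toBlocks_fromBlocks₂₂, transpose_neg, transpose_transpose, transpose_mul, hZ, hB, hC]
  noncomm_ring

theorem chartDeriv_mem_so {Z : Matrix n n R} {H : Matrix (n ⊕ n) (n ⊕ n) R} (hZ : Z ∈ so n R)
    (hH : H ∈ typeD n R) : chartDeriv Z H ∈ so n R := by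
  obtain ⟨P, B, hB, C, hC, rfl⟩ := exists_fromBlocks_of_mem_typeD hH
  rw [chartDeriv_fromBlocks hZ hB hC]
  exact sub_mem (add_mem (mul_mul_mem_so hB hZ) (transpose_sub_self_mem_so (Z * P))) hC

theorem exists_mem_so_mul_mul_eq {J S : Matrix n n R} (hJ : J ∈ so n R) (hJu : IsUnit J)
    (hS : S ∈ so n R) : ∃ B ∈ so n R, J * B * J = S := by
  have hdet : IsUnit J.det := (isUnit_iff_isUnit_det J).1 hJu
  refine ⟨J⁻¹ * S * J⁻¹, mul_mul_mem_so hS (inv_mem_so hJ), ?_⟩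
  rw [Matrix.mul_assoc J⁻¹, mul_nonsing_inv_cancel_left _ _ hdet,
    nonsing_inv_mul_cancel_right _ _ hdet]

theorem exists_transpose_mul_sub_mul_eq [Invertible (2 : R)] {J D : Matrix n n R} (hJu : IsUnit J)
    (hD : D ∈ so n R) : ∃ P : Matrix n n R, (J * P)ᵀ - J * P = D := by
  have hdet : IsUnit J.det := (isUnit_iff_isUnit_det J).1 hJu
  refine ⟨J⁻¹ * (-(⅟(2 : R) • D)), ?_⟩
  rw [mul_nonsing_inv_cancel_left _ _ hdet, transpose_neg, transpose_smul, (mem_so n R D).1 hD,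
    smul_neg, neg_neg, sub_neg_eq_add, invOf_two_smul_add_invOf_two_smul]

theorem exists_mem_so_add_eq_sub_eq [Invertible (2 : R)] {X Y : Matrix n n R} (hX : X ∈ so n R)
    (hY : Y ∈ so n R) : ∃ S ∈ so n R, ∃ D ∈ so n R, S + D = X ∧ S - D = Y := by
  refine ⟨⅟(2 : R) • (X + Y), SMulMemClass.smul_mem _ (add_mem hX hY),
    ⅟(2 : R) • (X - Y), SMulMemClass.smul_mem _ (sub_mem hX hY), ?_, ?_⟩
  · rw [← smul_add, add_add_sub_cancel, smul_add, invOf_two_smul_add_invOf_two_smul]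
  · rw [← smul_sub, add_sub_sub_cancel, smul_add, invOf_two_smul_add_invOf_two_smul]

theorem exists_mem_typeD_chartDeriv_eq [Invertible (2 : R)] {J A₁ A₂ A₃ : Matrix n n R}
    (hJ : J ∈ so n R) (hJu : IsUnit J) (h₁ : A₁ ∈ so n R) (h₂ : A₂ ∈ so n R) (h₃ : A₃ ∈ so n R) :
    ∃ H ∈ typeD n R, chartDeriv 0 H = A₁ ∧ chartDeriv J H = A₂ ∧ chartDeriv (-J) H = A₃ := by
  obtain ⟨S, hS, D, hD, hadd, hsub⟩ := exists_mem_so_add_eq_sub_eq (sub_mem h₂ h₁) (sub_mem h₃ h₁)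
  obtain ⟨B, hB, rfl⟩ := exists_mem_so_mul_mul_eq hJ hJu hS
  obtain ⟨P, rfl⟩ := exists_transpose_mul_sub_mul_eq hJu hD
  have hC : -A₁ ∈ so n R := neg_mem h₁
  refine ⟨fromBlocks P B (-A₁) (-Pᵀ), fromBlocks_mem_typeD_iff.2 ⟨hB, hC, rfl⟩, ?_, ?_, ?_⟩
  · simp [chartDeriv_fromBlocks (zero_mem _) hB hC]
  · rw [chartDeriv_fromBlocks hJ hB hC, hadd, sub_neg_eq_add, sub_add_cancel]
  · calc chartDeriv (-J) (fromBlocks P B (-A₁) (-Pᵀ))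
        = J * B * J - ((J * P)ᵀ - J * P) + A₁ := by
          rw [chartDeriv_fromBlocks (neg_mem hJ) hB hC]
          simp only [neg_mul, mul_neg, neg_neg, transpose_neg]
          abel
      _ = A₃ := by rw [hsub, sub_add_cancel]

theorem Phi_skew_and_surjective_general [Invertible (2 : R)] {J : Matrix n n R} (hJ : J ∈ so n R)
    (hJu : IsUnit J) :
    (∀ H ∈ typeD n R,
      chartDeriv 0 H ∈ so n R ∧ chartDeriv J H ∈ so n R ∧ chartDeriv (-J) H ∈ so n R) ∧
    ∀ A₁ A₂ A₃, A₁ ∈ so n R → A₂ ∈ so n R → A₃ ∈ so n R →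
      ∃ H ∈ typeD n R, chartDeriv 0 H = A₁ ∧ chartDeriv J H = A₂ ∧ chartDeriv (-J) H = A₃ :=
  ⟨fun _ hH => ⟨chartDeriv_mem_so (zero_mem _) hH, chartDeriv_mem_so hJ hH,
    chartDeriv_mem_so (neg_mem hJ) hH⟩,
    fun _ _ _ h₁ h₂ h₃ => exists_mem_typeD_chartDeriv_eq hJ hJu h₁ h₂ h₃⟩

end General

theorem Jmat_mem_so (m : ℕ) : Jmat m ∈ so (Fin 2 × Fin m) ℂ := by
  have hblock : !![0, 1; -1, 0]ᵀ = -!![0, 1; -1, (0 : ℂ)] := by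
    ext i j
    fin_cases i <;> fin_cases j <;> simp
  rw [mem_so, Jmat, blockDiagonal_transpose, ← blockDiagonal_neg]
  exact congrArg blockDiagonal (funext fun _ => hblock)

theorem isUnit_Jmat (m : ℕ) : IsUnit (Jmat m) := by
  have hblock : IsUnit !![0, 1; -1, (0 : ℂ)] := by
    simp [isUnit_iff_isUnit_det, det_fin_two_of]
  rw [isUnit_iff_isUnit_det, Jmat, det_blockDiagonal, Finset.prod_const]
  exact ((isUnit_iff_isUnit_det _).1 hblock).pow _

theorem mem_typeD_iff_Bmat {m : ℕ}
    {H : Matrix ((Fin 2 × Fin m) ⊕ (Fin 2 × Fin m)) ((Fin 2 × Fin m) ⊕ (Fin 2 × Fin m)) ℂ} :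
    H ∈ typeD (Fin 2 × Fin m) ℂ ↔ Hᵀ * Bmat m = -(Bmat m * H) := by
  have hB : Bmat m = (1 / 2 : ℂ) • JD (Fin 2 × Fin m) ℂ := by
    simp [Bmat, JD, fromBlocks_smul]
  rw [mem_typeD_iff, hB, Matrix.mul_smul, Matrix.smul_mul, ← smul_neg,
    (smul_right_injective _ (one_div_ne_zero two_ne_zero)).eq_iff]

section Components

variable {m : ℕ}
  (H : Matrix ((Fin 2 × Fin m) ⊕ (Fin 2 × Fin m)) ((Fin 2 × Fin m) ⊕ (Fin 2 × Fin m)) ℂ)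

theorem Phi₁_eq_chartDeriv : Phi₁ m H = chartDeriv 0 H := by
  simp [Phi₁, chartDeriv]

theorem Phi₂_eq_chartDeriv : Phi₂ m H = chartDeriv (Jmat m) H := rfl

theorem Phi₃_eq_chartDeriv : Phi₃ m H = chartDeriv (-Jmat m) H := by
  simp only [Phi₃, chartDeriv, neg_mul, mul_neg, neg_neg, sub_neg_eq_add, ← sub_eq_add_neg]

end Components

/-- Each component of `Φ(H)` is skew-symmetric for `H ∈ so(2h,Q)`, and `Φ` maps
`so(2h,Q)` onto `Skew(h,ℂ)³`. -/
theorem Phi_skew_and_surjective (m : ℕ) (hm : 1 ≤ m) :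
    (∀ H : Matrix ((Fin 2 × Fin m) ⊕ (Fin 2 × Fin m))
        ((Fin 2 × Fin m) ⊕ (Fin 2 × Fin m)) ℂ,
      Hᵀ * Bmat m = -(Bmat m * H) →
        (Phi₁ m H)ᵀ = -(Phi₁ m H) ∧ (Phi₂ m H)ᵀ = -(Phi₂ m H) ∧
          (Phi₃ m H)ᵀ = -(Phi₃ m H)) ∧
    (∀ A₁ A₂ A₃ : Matrix (Fin 2 × Fin m) (Fin 2 × Fin m) ℂ,
      A₁ᵀ = -A₁ → A₂ᵀ = -A₂ → A₃ᵀ = -A₃ →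
        ∃ H : Matrix ((Fin 2 × Fin m) ⊕ (Fin 2 × Fin m))
            ((Fin 2 × Fin m) ⊕ (Fin 2 × Fin m)) ℂ,
          Hᵀ * Bmat m = -(Bmat m * H) ∧
            Phi₁ m H = A₁ ∧ Phi₂ m H = A₂ ∧ Phi₃ m H = A₃) := by
  simpa only [mem_so, mem_typeD_iff_Bmat, ← Phi₁_eq_chartDeriv, ← Phi₂_eq_chartDeriv,
    ← Phi₃_eq_chartDeriv] using Phi_skew_and_surjective_general (Jmat_mem_so m) (isUnit_Jmat m)
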